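/- For k = 6 and k = 7, the online size Ramsey number of the 4-cycle versus the path on k vertices satisfies ř(C₄,P_k) ≥ 2k − 1; equivalently, Painter has a strategy surviving 2k − 2 rounds without creating a red C₄ or a blue P_k. -/

import Mathlib

open SimpleGraph

/-- The set `S` of edges of the infinite complete graph on `ℕ` contains a copy of
the graph `G`: there is an injective map of the vertices of `G` into `ℕ` sending
every edge of `G` into `S`. -/
def HasCopy {V : Type*} (G : SimpleGraph V) (S : Set (Sym2 ℕ)) : Prop :=
  ∃ f : V → ℕ, Function.Injective f ∧ ∀ a b, G.Adj a b → s(f a, f b) ∈ S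

/-- `BuilderWinsIn G H R B r` means: in the online Ramsey game with targets a red copy
of `G` and a blue copy of `H`, from the position in which the edges in `R` have been
colored red and the edges in `B` have been colored blue, Builder has a strategy that
guarantees, against every Painter strategy, that within at most `r` further rounds the
colored edges contain a red copy of `G` or a blue copy of `H`.  (In each round Builder
chooses a previously unchosen non-loop edge of the infinite complete graph on `ℕ`, and
Painter immediately colors it red or blue; so Builder wins within `r + 1` rounds iff he
has already won, or he can choose an edge such that whichever color Painter gives it,
he can win within `r` further rounds.) -/
def BuilderWinsIn {V W : Type*} (G : SimpleGraph V) (H : SimpleGraph W) :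
    Set (Sym2 ℕ) → Set (Sym2 ℕ) → ℕ → Prop
  | R, B, 0 => HasCopy G R ∨ HasCopy H B
  | R, B, (r + 1) => HasCopy G R ∨ HasCopy H B ∨
      ∃ e : Sym2 ℕ, ¬ e.IsDiag ∧ e ∉ R ∧ e ∉ B ∧
        BuilderWinsIn G H (insert e R) B r ∧ BuilderWinsIn G H R (insert e B) r

/-- The online size Ramsey number `ř(G, H)`: the least `t` such that, starting from the
empty position, Builder can force a red copy of `G` or a blue copy of `H` within at
most `t` rounds. -/
noncomputable def onlineRamsey {V W : Type*} (G : SimpleGraph V) (H : SimpleGraph W) : ℕ :=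
  sInf {t | BuilderWinsIn G H ∅ ∅ t}

/-!
Painter plays greedily: she colors an edge red unless this completes a red `C₄`. Then the ends of
every blue edge are joined by a red path of length 3. Suppose that a blue `Pₖ` appears within
`2k - 2` rounds. It uses `k - 1` blue edges, so there are at most `k - 1` red edges, and since they
connect the `k` vertices of the path, they form a tree on these vertices. Two ends of a path of
length 3 in a tree lie in different classes of its bipartition and are not adjacent, so the tree is
contained in the bipartite complement of `Pₖ`, which has `⌊k² / 4⌋ - (k - 1)` edges. For
`2 ≤ k ≤ 6` this is less than `k - 1`; for `k = 7` it equals `k - 1`, so the tree is the bipartite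
complement of `P₇` itself, in which the second and third vertices of `P₇` are not joined by a path
of length 3.
-/

section Ramsey

open Finset

theorem exists_isNClique_or_compl_isNClique {V : Type*} (G : SimpleGraph V) (m n : ℕ)
    (s : Finset V) (hs : (m + n).choose m ≤ #s) :
    (∃ t ⊆ s, G.IsNClique m t) ∨ ∃ t ⊆ s, Gᶜ.IsNClique n t := by
  classical
  induction m generalizing n s with
  | zero => exact .inl ⟨∅, empty_subset s, isNClique_zero.2 rfl⟩
  | succ m ihm =>
    induction n generalizing s with
    | zero => exact .inr ⟨∅, empty_subset s, isNClique_zero.2 rfl⟩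
    | succ n ihn =>
      have hpascal : (m + 1 + (n + 1)).choose (m + 1) =
          (m + (n + 1)).choose m + (m + 1 + n).choose (m + 1) := by
        rw [show m + 1 + (n + 1) = m + (n + 1) + 1 by ring, Nat.choose_succ_succ,
          show m + (n + 1) = m + 1 + n by ring]
      obtain ⟨v, hv⟩ : s.Nonempty := card_pos.1 <|
        (Nat.choose_pos (Nat.le_add_right _ _)).trans_le hs
      have hcard : #{w ∈ s.erase v | G.Adj v w} + #{w ∈ s.erase v | ¬G.Adj v w} + 1 = #s := by
        rw [card_filter_add_card_filter_not, card_erase_add_one hv]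
      have hinsert {p : V → Prop} [DecidablePred p] {t : Finset V}
          (ht : t ⊆ {w ∈ s.erase v | p w}) : insert v t ⊆ s :=
        insert_subset hv (ht.trans ((filter_subset _ _).trans (erase_subset _ _)))
      by_cases hadj : (m + (n + 1)).choose m ≤ #{w ∈ s.erase v | G.Adj v w}
      · rcases ihm _ _ hadj with ⟨t, ht, hclique⟩ | ⟨t, ht, hclique⟩
        · exact .inl ⟨insert v t, hinsert ht, hclique.insert fun w hw ↦ (mem_filter.1 (ht hw)).2⟩
        · exact .inr ⟨t, (subset_insert v t).trans (hinsert ht), hclique⟩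
      · rcases ihn {w ∈ s.erase v | ¬G.Adj v w} (by lia) with ⟨t, ht, hclique⟩ | ⟨t, ht, hclique⟩
        · exact .inl ⟨t, (subset_insert v t).trans (hinsert ht), hclique⟩
        · refine .inr ⟨insert v t, hinsert ht, hclique.insert fun w hw ↦ ?_⟩
          obtain ⟨hw, hnadj⟩ := mem_filter.1 (ht hw)
          exact (compl_adj G v w).2 ⟨(ne_of_mem_erase hw).symm, hnadj⟩

end Ramsey

section Game

open Finset

variable {V W : Type*} {G : SimpleGraph V} {H : SimpleGraph W}

theorem hasCopy_iff_isContained {S : Set (Sym2 ℕ)} : HasCopy G S ↔ G ⊑ fromEdgeSet S := by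
  rw [isContained_iff_exists_le_comap]
  constructor
  · rintro ⟨f, hf, hmem⟩
    exact ⟨⟨f, hf⟩, fun a b hab ↦ (fromEdgeSet_adj S).2 ⟨hmem a b hab, hf.ne hab.ne⟩⟩
  · rintro ⟨f, hle⟩
    exact ⟨f, f.injective, fun a b hab ↦ ((fromEdgeSet_adj S).1 (hle hab)).1⟩

theorem HasCopy.mono {S T : Set (Sym2 ℕ)} (hST : S ⊆ T) : HasCopy G S → HasCopy G T
  | ⟨f, hf, hmem⟩ => ⟨f, hf, fun a b hab ↦ hST (hmem a b hab)⟩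

theorem HasCopy.of_isNClique [Fintype V] {S : Set (Sym2 ℕ)} {t : Finset ℕ}
    (ht : (fromEdgeSet S).IsNClique (Fintype.card V) t) : HasCopy G S :=
  hasCopy_iff_isContained.2 <| (IsContained.of_le le_top).trans <|
    not_not.1 fun h ↦ cliqueFree_iff_top_free.2 h t ht

theorem finite_edgeSet_fromEdgeSet {V : Type*} (S : Finset (Sym2 V)) :
    Finite (fromEdgeSet (S : Set (Sym2 V))).edgeSet := by
  rw [edgeSet_fromEdgeSet]
  exact S.finite_toSet.subset Set.sdiff_subset

theorem natCard_edgeSet_fromEdgeSet_le {V : Type*} (S : Finset (Sym2 V)) :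
    Nat.card (fromEdgeSet (S : Set (Sym2 V))).edgeSet ≤ #S := by
  rw [edgeSet_fromEdgeSet, ← Set.ncard_coe_finset, Nat.card_coe_set_eq]
  exact Set.ncard_le_ncard Set.sdiff_subset S.finite_toSet

theorem HasCopy.natCard_edgeSet_le {S : Finset (Sym2 ℕ)} (h : HasCopy G S) :
    Nat.card G.edgeSet ≤ #S := by
  obtain ⟨f⟩ := hasCopy_iff_isContained.1 h
  have := finite_edgeSet_fromEdgeSet S
  exact (Nat.card_le_card_of_injective _ f.mapEdgeSet.injective).trans
    (natCard_edgeSet_fromEdgeSet_le S)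

theorem BuilderWinsIn.of_hasCopy {R B : Set (Sym2 ℕ)} (h : HasCopy G R ∨ HasCopy H B) :
    ∀ r, BuilderWinsIn G H R B r
  | 0 => h
  | _ + 1 => h.imp_right .inl

theorem BuilderWinsIn.succ {R B : Set (Sym2 ℕ)} {r : ℕ} (h : BuilderWinsIn G H R B r) :
    BuilderWinsIn G H R B (r + 1) := by
  induction r generalizing R B with
  | zero => exact .of_hasCopy h 1
  | succ r ih =>
    rcases h with h | h | ⟨e, hdiag, heR, heB, hred, hblue⟩
    · exact .inl h
    · exact .inr (.inl h)
    · exact .inr (.inr ⟨e, hdiag, heR, heB, ih hred, ih hblue⟩)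

theorem BuilderWinsIn.mono {R B : Set (Sym2 ℕ)} {r s : ℕ} (hrs : r ≤ s)
    (h : BuilderWinsIn G H R B r) : BuilderWinsIn G H R B s :=
  Nat.le_induction h (fun _ _ ↦ .succ) s hrs

theorem builderWinsIn_of_forall_coloring (E : Finset (Sym2 ℕ)) (hdiag : ∀ e ∈ E, ¬e.IsDiag)
    (hwin : ∀ R B : Set (Sym2 ℕ), ↑E ⊆ R ∪ B → HasCopy G R ∨ HasCopy H B)
    (R B : Set (Sym2 ℕ)) (n : ℕ) (hn : (↑E \ (R ∪ B)).ncard ≤ n) : BuilderWinsIn G H R B n := by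
  by_cases hcolored : ↑E ⊆ R ∪ B
  · exact .of_hasCopy (hwin R B hcolored) n
  obtain ⟨e, heE, heRB⟩ := Set.not_subset.1 hcolored
  have hlt : (↑E \ insert e (R ∪ B)).ncard < (↑E \ (R ∪ B)).ncard := by
    refine Set.ncard_lt_ncard ?_ (E.finite_toSet.subset Set.sdiff_subset)
    exact ⟨Set.sdiff_subset_sdiff_right (Set.subset_insert _ _),
      fun h ↦ (h ⟨heE, heRB⟩).2 (Set.mem_insert _ _)⟩
  match n with
  | 0 => lia
  | n + 1 =>
    refine .inr (.inr ⟨e, hdiag e heE, fun h ↦ heRB (.inl h), fun h ↦ heRB (.inr h), ?_, ?_⟩)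
    · exact builderWinsIn_of_forall_coloring E hdiag hwin _ _ n (by rw [Set.insert_union]; lia)
    · exact builderWinsIn_of_forall_coloring E hdiag hwin _ _ n (by rw [Set.union_insert]; lia)

-- Without this, `onlineRamsey` might be the junk value `sInf ∅ = 0`.
theorem exists_builderWinsIn [Finite V] [Finite W] (G : SimpleGraph V) (H : SimpleGraph W) :
    ∃ t, BuilderWinsIn G H ∅ ∅ t := by
  have := Fintype.ofFinite V
  have := Fintype.ofFinite W
  set U := range ((Fintype.card V + Fintype.card W).choose (Fintype.card V))
  refine ⟨_, builderWinsIn_of_forall_coloring {e ∈ U.sym2 | ¬e.IsDiag}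
    (fun e he ↦ (mem_filter.1 he).2) (fun R B hcolored ↦ ?_) ∅ ∅ _ le_rfl⟩
  rcases exists_isNClique_or_compl_isNClique (fromEdgeSet R) _ _ U (card_range _).ge with
    ⟨t, -, ht⟩ | ⟨t, htU, ht⟩
  · exact .inl (.of_isNClique ht)
  · refine .inr (.of_isNClique (t := t) ⟨fun x hx y hy hxy ↦ ?_, ht.card_eq⟩)
    have hnadj := ((compl_adj _ x y).1 (ht.isClique hx hy hxy)).2
    have hmem : s(x, y) ∈ R ∪ B := hcolored <| mem_coe.2 <| mem_filter.2
      ⟨mk_mem_sym2_iff.2 ⟨htU hx, htU hy⟩, by simpa using hxy⟩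
    rw [fromEdgeSet_adj] at hnadj ⊢
    exact ⟨hmem.resolve_left fun h ↦ hnadj ⟨h, hxy⟩, hxy⟩

theorem lt_onlineRamsey [Finite V] [Finite W] {n : ℕ} (h : ¬BuilderWinsIn G H ∅ ∅ n) :
    n < onlineRamsey G H :=
  not_le.1 fun hle ↦ h (.mono hle (Nat.sInf_mem (exists_builderWinsIn G H)))

/-- The red edges `R` and blue edges `B` may have arisen against the greedy Painter, who colors an
edge red unless this creates a red copy of `G`. The condition on a blue edge refers to the present
set `R` instead of the one when the edge was colored, which is weaker as `R` only grows. -/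
structure IsGreedyPosition (G : SimpleGraph V) (R B : Finset (Sym2 ℕ)) : Prop where
  not_hasCopy : ¬HasCopy G (R : Set (Sym2 ℕ))
  hasCopy_insert : ∀ e ∈ B, HasCopy G (insert e (R : Set (Sym2 ℕ)))

theorem IsGreedyPosition.not_builderWinsIn {N : ℕ}
    (hN : ∀ R B, IsGreedyPosition G R B → #R + #B ≤ N → ¬HasCopy H (B : Set (Sym2 ℕ)))
    {R B : Finset (Sym2 ℕ)} (hRB : IsGreedyPosition G R B) {r : ℕ} (hr : #R + #B + r ≤ N) :
    ¬BuilderWinsIn G H R B r := by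
  classical
  induction r generalizing R B with
  | zero => exact not_or.2 ⟨hRB.not_hasCopy, hN R B hRB hr⟩
  | succ r ih =>
    rintro (hG | hH | ⟨e, -, -, -, hred, hblue⟩)
    · exact hRB.not_hasCopy hG
    · exact hN R B hRB (by lia) hH
    by_cases hcopy : HasCopy G (insert e (R : Set (Sym2 ℕ)))
    · have hpos : IsGreedyPosition G R (insert e B) :=
        ⟨hRB.not_hasCopy, forall_mem_insert _ _ _ |>.2 ⟨hcopy, hRB.hasCopy_insert⟩⟩
      have hcard := card_insert_le e B
      exact ih hpos (by lia) (by rwa [coe_insert])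
    · have hpos : IsGreedyPosition G (insert e R) B := by
        refine ⟨by rwa [coe_insert], fun b hb ↦ (hRB.hasCopy_insert b hb).mono ?_⟩
        exact Set.insert_subset_insert (coe_subset.2 (subset_insert e R))
      have hcard := card_insert_le e R
      exact ih hpos (by lia) (by rwa [coe_insert])

end Game

section Path

variable {V : Type*} {G : SimpleGraph V} {u v w : V}

theorem exists_isCycle_snd_eq {c : G.Walk w w} (hc : c.IsCycle) (h : s(u, v) ∈ c.edges) :
    ∃ d : G.Walk u u, d.IsCycle ∧ d.length = c.length ∧ d.snd = v := by
  classical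
  have hu := c.fst_mem_support_of_mem_edges h
  obtain ⟨r, hr, hlength, hmem⟩ : ∃ r : G.Walk u u, r.IsCycle ∧ r.length = c.length ∧
      s(u, v) ∈ r.edges :=
    ⟨c.rotate u hu, hc.rotate hu, c.length_rotate u hu, (c.rotate_edges u hu).mem_iff.2 h⟩
  rw [← Walk.cons_tail_eq r hr.not_nil, Walk.edges_cons, List.mem_cons] at hmem
  rcases hmem with hsnd | htail
  · exact ⟨r, hr, hlength, (Sym2.congr_right.1 hsnd).symm⟩
  · refine ⟨r.reverse, hr.reverse, r.length_reverse.trans hlength, ?_⟩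
    rw [Walk.snd_reverse, ← Walk.cons_tail_eq r hr.not_nil, Walk.penultimate_cons_of_not_nil,
      hr.isPath_tail.eq_penultimate_of_mem_edges htail]
    exact fun hnil ↦ by simp [Walk.edges_eq_nil.2 hnil] at htail

theorem exists_isPath_of_mem_edges_isCycle {c : G.Walk w w} (hc : c.IsCycle)
    (h : s(u, v) ∈ c.edges) :
    ∃ p : G.Walk u v, p.IsPath ∧ p.length + 1 = c.length ∧ s(u, v) ∉ p.edges := by
  obtain ⟨d, hd, hlength, rfl⟩ := exists_isCycle_snd_eq hc h
  have htail := hd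
  rw [← Walk.cons_tail_eq d hd.not_nil, Walk.cons_isCycle_iff] at htail
  exact ⟨d.tail.reverse, htail.1.reverse,
    by rw [Walk.length_reverse, Walk.length_tail_add_one hd.not_nil, hlength],
    by simpa using htail.2⟩

/-- `u` and `v` are the ends of a path of length `n` in `G`. This holds in the red graph for the
ends of a blue edge when the greedy Painter avoids a red cycle of length `n + 1`. -/
def JoinedByPath (G : SimpleGraph V) (n : ℕ) (u v : V) : Prop :=
  ∃ p : G.Walk u v, p.IsPath ∧ p.length = n

theorem JoinedByPath.not_adj (hG : G.IsAcyclic) {n : ℕ} (hn : n ≠ 1) (h : JoinedByPath G n u v) :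
    ¬G.Adj u v := by
  obtain ⟨p, hp, hlength⟩ := h
  intro hadj
  have := hG.subsingleton_path u v
  have heq : p = hadj.toWalk :=
    congrArg Subtype.val (Subsingleton.elim (⟨p, hp⟩ : G.Path u v) (Path.singleton hadj))
  exact hn (by rw [← hlength, heq, hadj.length_toWalk])

theorem JoinedByPath.exists_adj_adj_adj (h : JoinedByPath G 3 u v) :
    ∃ a b, G.Adj u a ∧ G.Adj a b ∧ G.Adj b v := by
  obtain ⟨p, -, hlength⟩ := h
  match p, hlength with
  | .cons hua (.cons hab (.cons hbv .nil)), _ => exact ⟨_, _, hua, hab, hbv⟩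

theorem joinedByPath_of_isContained_cycleGraph_sup_edge {n : ℕ} (hn : 2 ≤ n)
    (hfree : (cycleGraph (n + 1)).Free G) (h : cycleGraph (n + 1) ⊑ G ⊔ edge u v) :
    JoinedByPath G n u v := by
  obtain ⟨w, c, hc, hlength⟩ := (cycleGraph_isContained_iff (by lia)).1 h
  have hedge {e : Sym2 V} (he : e ∈ (G ⊔ edge u v).edgeSet) (hne : e ≠ s(u, v)) :
      e ∈ G.edgeSet := by
    induction e with
    | _ x y =>
      rw [mem_edgeSet, sup_adj, edge_adj] at he
      rw [ne_eq, Sym2.eq_iff] at hne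
      exact he.resolve_right fun h ↦ hne (by tauto)
  have hmem : s(u, v) ∈ c.edges := by
    by_contra hnot
    refine hfree ((cycleGraph_isContained_iff (by lia)).2 ⟨w, c.transfer G fun e he ↦
      hedge (c.edges_subset_edgeSet he) (ne_of_mem_of_not_mem he hnot), hc.transfer _, ?_⟩)
    rw [Walk.length_transfer, hlength]
  obtain ⟨p, hp, hplength, hnot⟩ := exists_isPath_of_mem_edges_isCycle hc hmem
  refine ⟨p.transfer G fun e he ↦
    hedge (p.edges_subset_edgeSet he) (ne_of_mem_of_not_mem he hnot), hp.transfer _, ?_⟩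
  rw [Walk.length_transfer]
  lia

end Path

section Tree

open Finset

variable {V : Type*}

/-- The bipartite complement of `H` with respect to the 2-coloring `c`: the graph whose edges are
the differently colored pairs that are not edges of `H`. It confines the red tree when `H` is the
blue path. -/
def bipartiteCompl (H : SimpleGraph V) (c : H.Coloring Bool) : SimpleGraph V :=
  (⊤ : SimpleGraph Bool).comap c \ H

instance {H : SimpleGraph V} {c : H.Coloring Bool} [DecidableRel H.Adj] :
    DecidableRel (bipartiteCompl H c).Adj :=
  fun u v ↦ inferInstanceAs (Decidable (c u ≠ c v ∧ ¬H.Adj u v))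

instance {k : ℕ} : DecidableRel (pathGraph k).Adj :=
  fun _ _ ↦ decidable_of_iff' _ pathGraph_adj

theorem coloring_bool_eq_iff_eq {H : SimpleGraph V} (hH : H.Preconnected) (c d : H.Coloring Bool)
    (u v : V) : c u = c v ↔ d u = d v := by
  obtain ⟨p⟩ := hH u v
  rw [Bool.eq_iff_iff, ← c.even_length_iff_congr p, d.even_length_iff_congr p, ← Bool.eq_iff_iff]

theorem le_bipartiteCompl_of_joinedByPath {G H : SimpleGraph V} (hG : G.IsAcyclic)
    (hH : H.Preconnected) (c : H.Coloring Bool) {n : ℕ} (hodd : Odd n) (hn : n ≠ 1)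
    (hjoin : ∀ u v, H.Adj u v → JoinedByPath G n u v) : G ≤ bipartiteCompl H c := by
  let d : G.Coloring Bool := recolorOfEquiv G finTwoEquiv hG.coloringTwo
  let d' : H.Coloring Bool := .mk d fun {u v} huv ↦ by
    obtain ⟨p, -, rfl⟩ := hjoin u v huv
    have hnot := mt (d.even_length_iff_congr p).2 (Nat.not_even_iff_odd.2 hodd)
    rwa [← Bool.eq_iff_iff] at hnot
  exact fun u v huv ↦ ⟨mt (coloring_bool_eq_iff_eq hH c d' u v).1 (d.valid huv),
    fun hadj ↦ (hjoin u v hadj).not_adj hG hn huv⟩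

theorem card_edgeFinset_bipartiteCompl_pathGraph_lt {k : ℕ} (hk : 2 ≤ k) (hk' : k < 7) :
    #(bipartiteCompl _ (pathGraph.bicoloring k)).edgeFinset + 1 < k := by
  interval_cases k <;> decide

theorem card_edgeFinset_bipartiteCompl_pathGraph_seven :
    #(bipartiteCompl _ (pathGraph.bicoloring 7)).edgeFinset = 6 := by
  decide

theorem not_joinedByPath_three_bipartiteCompl_pathGraph_seven :
    ¬JoinedByPath (bipartiteCompl _ (pathGraph.bicoloring 7)) 3 1 2 := by
  intro h
  obtain ⟨a, b, h1a, hab, hb2⟩ := h.exists_adj_adj_adj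
  revert a b
  decide

theorem not_isTree_of_joinedByPath_three {k : ℕ} (hk : 2 ≤ k) (hk' : k ≤ 7)
    {G : SimpleGraph (Fin k)} (hjoin : ∀ i j, (pathGraph k).Adj i j → JoinedByPath G 3 i j) :
    ¬G.IsTree := by
  classical
  intro hG
  have hle : G ≤ bipartiteCompl _ (pathGraph.bicoloring k) :=
    le_bipartiteCompl_of_joinedByPath hG.isAcyclic (pathGraph_preconnected k) _ (by decide)
      (by decide) hjoin
  have hcard : #G.edgeFinset + 1 = k := hG.card_edgeFinset.trans (Fintype.card_fin k)
  obtain hlt | rfl := hk'.lt_or_eq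
  · have hcard_le := card_le_card (edgeFinset_mono hle)
    have hcard_lt := card_edgeFinset_bipartiteCompl_pathGraph_lt hk hlt
    lia
  · have heq : G = bipartiteCompl _ (pathGraph.bicoloring 7) := by
      refine edgeFinset_inj.1 (eq_of_subset_of_card_le (edgeFinset_mono hle) ?_)
      rw [card_edgeFinset_bipartiteCompl_pathGraph_seven]
      lia
    exact not_joinedByPath_three_bipartiteCompl_pathGraph_seven (heq ▸ hjoin 1 2 (by decide))

end Tree

section Component

variable {V W : Type*} {G : SimpleGraph V}

theorem JoinedByPath.map {G' : SimpleGraph W} {n : ℕ} {u v : V}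
    (h : JoinedByPath G n u v) (f : G ↪g G') : JoinedByPath G' n (f u) (f v) := by
  obtain ⟨p, hp, hlength⟩ := h
  exact ⟨p.map f.toHom, hp.map f.injective, (p.length_map _).trans hlength⟩

theorem joinedByPath_toSimpleGraph {C : G.ConnectedComponent} {n : ℕ} {u v : C.supp}
    (h : JoinedByPath G n u v) : JoinedByPath C.toSimpleGraph n u v := by
  classical
  obtain ⟨p, hp, hlength⟩ := h
  have hsupp : ∀ x ∈ p.support, x ∈ C.supp := fun x hx ↦
    (ConnectedComponent.sound (p.takeUntil x hx).reachable.symm).trans u.2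
  have hmap := Walk.map_induce p hsupp
  refine ⟨p.induce C.supp hsupp, .of_map (f := (Embedding.induce C.supp).toHom) ?_, ?_⟩
  · rwa [hmap]
  · rw [← hlength]
    exact (Walk.length_map _ _).symm.trans (congrArg Walk.length hmap)

theorem finite_of_connected_of_finite_edgeSet (hG : G.Connected) [Finite G.edgeSet] :
    Finite V := by
  cases subsingleton_or_nontrivial V
  · infer_instance
  have hfinite : (⋃ e ∈ G.edgeSet, {x | x ∈ e}).Finite :=
    (Set.toFinite G.edgeSet).biUnion fun e _ ↦ by
      classical exact e.toFinset.finite_toSet.subset fun x hx ↦ Sym2.mem_toFinset.2 hx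
  rw [← Set.finite_univ_iff, ← hG.preconnected.support_eq_univ]
  refine hfinite.subset fun x ⟨y, hxy⟩ ↦ Set.mem_biUnion ((mem_edgeSet G).2 hxy) ?_
  exact Sym2.mem_mk_left x y

theorem isTree_and_bijective_of_card_edgeSet_lt [Finite G.edgeSet] (hG : G.Connected)
    {f : W → V} (hf : Function.Injective f) (hcard : Nat.card G.edgeSet < Nat.card W) :
    G.IsTree ∧ Function.Bijective f := by
  have : Finite V := finite_of_connected_of_finite_edgeSet hG
  have hV := hG.card_vert_le_card_edgeSet_add_one
  have hW := Nat.card_le_card_of_injective f hf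
  exact ⟨isTree_iff_connected_and_card.2 ⟨hG, by lia⟩, hf.bijective_of_nat_card_le (by lia)⟩

theorem not_forall_joinedByPath_three_of_connected {k : ℕ} (hk : 2 ≤ k) (hk' : k ≤ 7)
    [Finite G.edgeSet] (hG : G.Connected) (hcard : Nat.card G.edgeSet < k) {f : Fin k → V}
    (hf : Function.Injective f) :
    ¬∀ i j, (pathGraph k).Adj i j → JoinedByPath G 3 (f i) (f j) := by
  intro hjoin
  obtain ⟨htree, hbij⟩ :=
    isTree_and_bijective_of_card_edgeSet_lt hG hf (hcard.trans_eq (Nat.card_fin k).symm)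
  let φ := Iso.comap (.ofBijective f hbij) G
  have hφ (i : Fin k) : φ.symm (f i) = i := φ.symm_apply_apply i
  refine not_isTree_of_joinedByPath_three hk hk' (fun i j hij ↦ ?_) (φ.isTree_iff.2 htree)
  simpa only [RelIso.coe_toRelEmbedding, hφ] using (hjoin i j hij).map φ.symm.toRelEmbedding

theorem reachable_of_joinedByPath {H : SimpleGraph W} {n : ℕ} {f : W → V}
    (hjoin : ∀ i j, H.Adj i j → JoinedByPath G n (f i) (f j)) {i j : W} (hij : H.Reachable i j) :
    G.Reachable (f i) (f j) := by
  rw [reachable_iff_reflTransGen] at hij ⊢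
  refine hij.lift' f fun a b hab ↦ (reachable_iff_reflTransGen _ _).1 ?_
  obtain ⟨p, -⟩ := hjoin a b hab
  exact p.reachable

theorem not_forall_joinedByPath_three {k : ℕ} (hk : 2 ≤ k) (hk' : k ≤ 7) [Finite G.edgeSet]
    (hcard : Nat.card G.edgeSet < k) {f : Fin k → V} (hf : Function.Injective f) :
    ¬∀ i j, (pathGraph k).Adj i j → JoinedByPath G 3 (f i) (f j) := by
  intro hjoin
  let C := G.connectedComponentMk (f ⟨0, by lia⟩)
  have hmem (i : Fin k) : f i ∈ C.supp :=
    ConnectedComponent.sound (reachable_of_joinedByPath hjoin (pathGraph_preconnected k i _))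
  have hinj := Hom.mapEdgeSet.injective C.toSimpleGraph_hom Subtype.val_injective
  have : Finite C.toSimpleGraph.edgeSet := .of_injective _ hinj
  exact not_forall_joinedByPath_three_of_connected hk hk' C.connected_toSimpleGraph
    ((Nat.card_le_card_of_injective _ hinj).trans_lt hcard) (f := fun i ↦ ⟨f i, hmem i⟩)
    (fun i j hij ↦ hf (congrArg Subtype.val hij))
    fun i j hij ↦ joinedByPath_toSimpleGraph (hjoin i j hij)

end Component

section FourCycle

open Finset

theorem card_le_natCard_edgeSet_pathGraph_add_one (k : ℕ) :
    k ≤ Nat.card (pathGraph k).edgeSet + 1 := by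
  cases k with
  | zero => exact Nat.zero_le _
  | succ k => simpa using (pathGraph_connected k).card_vert_le_card_edgeSet_add_one

theorem IsGreedyPosition.joinedByPath {n : ℕ} (hn : 2 ≤ n) {R B : Finset (Sym2 ℕ)}
    (hRB : IsGreedyPosition (cycleGraph (n + 1)) R B) {u v : ℕ} (huv : s(u, v) ∈ B) :
    JoinedByPath (fromEdgeSet (R : Set (Sym2 ℕ))) n u v := by
  refine joinedByPath_of_isContained_cycleGraph_sup_edge hn
    (mt hasCopy_iff_isContained.2 hRB.not_hasCopy) ?_
  rw [edge, ← fromEdgeSet_union, Set.union_singleton]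
  exact hasCopy_iff_isContained.1 (hRB.hasCopy_insert _ huv)

theorem IsGreedyPosition.not_hasCopy_pathGraph {k : ℕ} (hk : 2 ≤ k) (hk' : k ≤ 7)
    {R B : Finset (Sym2 ℕ)} (hRB : IsGreedyPosition (cycleGraph 4) R B)
    (hcard : #R + #B ≤ 2 * k - 2) : ¬HasCopy (pathGraph k) (B : Set (Sym2 ℕ)) := by
  intro hB
  have hblue := card_le_natCard_edgeSet_pathGraph_add_one k
  have hblue_le := hB.natCard_edgeSet_le
  have hred := natCard_edgeSet_fromEdgeSet_le R
  obtain ⟨f, hf, hmem⟩ := hB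
  have := finite_edgeSet_fromEdgeSet R
  exact not_forall_joinedByPath_three hk hk' (by lia) hf
    fun i j hij ↦ hRB.joinedByPath (by decide) (hmem i j hij)

end FourCycle

theorem onlineRamsey_C4_path_lower_six_seven_general (k : ℕ) (hk : 2 ≤ k) (hk' : k ≤ 7) :
    2 * k - 1 ≤ onlineRamsey (cycleGraph 4) (pathGraph k) ∧
      ¬ BuilderWinsIn (cycleGraph 4) (pathGraph k) ∅ ∅ (2 * k - 2) := by
  have hstart : IsGreedyPosition (cycleGraph 4) ∅ ∅ := by
    refine ⟨?_, fun e he ↦ absurd he (Finset.notMem_empty e)⟩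
    rintro ⟨f, -, hmem⟩
    simpa using hmem 0 1 (by simp [cycleGraph_adj])
  have hnot : ¬BuilderWinsIn (cycleGraph 4) (pathGraph k) ∅ ∅ (2 * k - 2) := by
    simpa using hstart.not_builderWinsIn (fun _ _ hRB ↦ hRB.not_hasCopy_pathGraph hk hk')
      (r := 2 * k - 2) (by simp)
  have hlt := lt_onlineRamsey hnot
  exact ⟨by lia, hnot⟩

/-- For `k = 6` and `k = 7` we have `ř(C₄, Pₖ) ≥ 2 * k - 1`; equivalently, Painter has
a strategy surviving `2 * k - 2` rounds without creating a red `C₄` or a blue `Pₖ`,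
i.e. Builder cannot force a win from the empty position within `2 * k - 2` rounds. -/
theorem onlineRamsey_C4_path_lower_six_seven (k : ℕ) (hk : k = 6 ∨ k = 7) :
    2 * k - 1 ≤ onlineRamsey (cycleGraph 4) (pathGraph k) ∧
      ¬ BuilderWinsIn (cycleGraph 4) (pathGraph k) ∅ ∅ (2 * k - 2) :=
  onlineRamsey_C4_path_lower_six_seven_general k (by lia) (by lia)
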